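/- Let m be a natural number and let v : ℝ → ℝ be m-times continuously differentiable such that for every k ≤ m the iterated derivative v^{(k)} has at most polynomial growth. Then (1/m!)·∫_ℝ (v^{(m)}(t))² dN(0,1)(t) = ∑_{n=0}^∞ (C(n,m)/n!)·(∫_ℝ v(t)·He_n(t) dN(0,1)(t))², where C(n,m) is the binomial coefficient (equal to 0 when m > n). -/

import Mathlib

open MeasureTheory ProbabilityTheory Real Polynomial

namespace HermiteParseval

/-- the standard Gaussian -/
noncomputable abbrev γ : Measure ℝ := gaussianReal 0 1

/-- real evaluation of Hermite polynomials -/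
noncomputable def H (n : ℕ) (t : ℝ) : ℝ := Polynomial.aeval t (Polynomial.hermite n)

/-- continuous of polynomial growth -/
def PG (f : ℝ → ℝ) : Prop :=
  Continuous f ∧ ∃ C : ℝ, 0 < C ∧ ∃ N : ℕ, ∀ t : ℝ, |f t| ≤ C * (1 + |t|) ^ N

lemma PG.mul {f g : ℝ → ℝ} (hf : PG f) (hg : PG g) : PG (fun t => f t * g t) := by
  obtain ⟨hfc, C, hC, N, h⟩ := hf
  obtain ⟨hgc, D, hD, M, h'⟩ := hg
  refine ⟨hfc.mul hgc, C * D, mul_pos hC hD, N + M, fun t => ?_⟩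
  rw [abs_mul]
  calc |f t| * |g t| ≤ (C * (1 + |t|) ^ N) * (D * (1 + |t|) ^ M) := by
        gcongr
        exacts [h t, h' t]
    _ = _ := by ring

lemma PG.add {f g : ℝ → ℝ} (hf : PG f) (hg : PG g) : PG (fun t => f t + g t) := by
  obtain ⟨hfc, C, hC, N, h⟩ := hf
  obtain ⟨hgc, D, hD, M, h'⟩ := hg
  refine ⟨hfc.add hgc, C + D, add_pos hC hD, N + M, fun t => ?_⟩
  have h1 : (1:ℝ) ≤ 1 + |t| := by linarith [abs_nonneg t]
  calc |f t + g t| ≤ |f t| + |g t| := abs_add_le _ _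
    _ ≤ C * (1 + |t|) ^ N + D * (1 + |t|) ^ M := add_le_add (h t) (h' t)
    _ ≤ C * (1 + |t|) ^ (N + M) + D * (1 + |t|) ^ (N + M) := by
        gcongr <;> first | exact h1 | omega
    _ = _ := by ring

lemma PG.const (c : ℝ) : PG (fun _ => c) :=
  ⟨continuous_const, |c| + 1, by positivity, 0, fun t => by simp⟩

lemma PG.id : PG (fun t => t) :=
  ⟨continuous_id, 1, one_pos, 1, fun t => by simp⟩

lemma PG.poly (p : ℤ[X]) : PG (fun t => Polynomial.aeval t p) := by
  induction p using Polynomial.induction_on with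
  | C a => simpa using PG.const a
  | add p q hp hq => simpa using hp.add hq
  | monomial n a h =>
    have := h.mul PG.id
    simpa [pow_succ, mul_assoc] using this

lemma PG.H (n : ℕ) : PG (H n) := PG.poly _

lemma integrable_growth (N : ℕ) : Integrable (fun t : ℝ => (1 + |t|) ^ N) γ := by
  have h0 : MemLp (fun t : ℝ => t) (N : ENNReal) γ :=
    memLp_id_gaussianReal' (μ := 0) (v := 1) (N : ENNReal) (ENNReal.natCast_ne_top N)
  have h1 : MemLp (fun t : ℝ => 1 + ‖t‖) (N : ENNReal) γ :=
    (memLp_const (1 : ℝ)).add h0.norm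
  have h2 := h1.integrable_norm_pow'
  refine h2.congr (.of_forall fun t => ?_)
  have h3 : abs (1 + |t|) = 1 + |t| := abs_of_nonneg (by positivity)
  simp only [Real.norm_eq_abs, h3]

lemma PG.integrable {f : ℝ → ℝ} (hf : PG f) : Integrable f γ := by
  obtain ⟨hfc, C, hC, N, h⟩ := hf
  refine ((integrable_growth N).const_mul C).mono' hfc.aestronglyMeasurable
    (.of_forall fun t => ?_)
  simpa only [Real.norm_eq_abs] using h t

lemma PG.memLp {f : ℝ → ℝ} (hf : PG f) : MemLp f 2 γ := by
  rw [memLp_two_iff_integrable_sq hf.1.aestronglyMeasurable]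
  simpa [pow_two] using (hf.mul hf).integrable

lemma PG.integrable_vol {f : ℝ → ℝ} (hf : PG f) :
    Integrable (fun t => f t * gaussianPDFReal 0 1 t) := by
  have := hf.integrable
  rw [γ, gaussianReal_of_var_ne_zero _ one_ne_zero,
    integrable_withDensity_iff_integrable_smul' (measurable_gaussianPDF _ _)
      (ae_of_all _ fun _ ↦ gaussianPDF_lt_top)] at this
  simpa [mul_comm] using this

lemma integral_γ (f : ℝ → ℝ) : ∫ t, f t ∂γ = ∫ t, f t * gaussianPDFReal 0 1 t := by
  rw [γ, integral_gaussianReal_eq_integral_smul one_ne_zero]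
  simp [mul_comm]

lemma hasDerivAt_H (n : ℕ) (t : ℝ) :
    HasDerivAt (H n) (Polynomial.aeval t (derivative (hermite n))) t :=
  (hermite n).hasDerivAt_aeval t

lemma H_succ (n : ℕ) (t : ℝ) :
    H (n + 1) t = t * H n t - Polynomial.aeval t (derivative (hermite n)) := by
  simp [H, hermite_succ]

lemma hasDerivAt_pdf (t : ℝ) :
    HasDerivAt (gaussianPDFReal 0 1) (-t * gaussianPDFReal 0 1 t) t := by
  have h : HasDerivAt (fun x : ℝ => -(x - 0) ^ 2 / (2 * ((1 : NNReal) : ℝ))) (-t) t := by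
    have := (((hasDerivAt_id t).sub_const 0).pow 2).neg.div_const (2 * ((1 : NNReal) : ℝ))
    convert! this using 1
    simp
    ring
  have := h.exp.const_mul (√(2 * π * ((1 : NNReal) : ℝ)))⁻¹
  convert! this using 1
  simp only [gaussianPDFReal]
  ring

lemma hasDerivAt_Hg (n : ℕ) (t : ℝ) :
    HasDerivAt (fun t => H n t * gaussianPDFReal 0 1 t)
      (-(H (n + 1) t * gaussianPDFReal 0 1 t)) t := by
  convert! (hasDerivAt_H n t).mul (hasDerivAt_pdf t) using 1
  rw [H_succ]; ring

/-- Gaussian integration by parts -/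
lemma ibp {f f' : ℝ → ℝ} (hf : PG f) (hf' : PG f') (hd : ∀ t, HasDerivAt f (f' t) t) (n : ℕ) :
    ∫ t, f' t * H n t ∂γ = ∫ t, f t * H (n + 1) t ∂γ := by
  have key := integral_mul_deriv_eq_deriv_mul_of_integrable (u := f) (u' := f')
    (v := fun t => H n t * gaussianPDFReal 0 1 t)
    (v' := fun t => -(H (n + 1) t * gaussianPDFReal 0 1 t))
    (fun t _ => hd t) (fun t _ => hasDerivAt_Hg n t)
    (by
      convert! ((hf.mul (PG.H (n + 1))).integrable_vol).neg using 1
      ext t; simp; ring)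
    (by
      convert! ((hf'.mul (PG.H n)).integrable_vol) using 1
      ext t; simp; ring)
    (by
      convert! ((hf.mul (PG.H n)).integrable_vol) using 1
      ext t; simp; ring)
  rw [integral_γ, integral_γ]
  simp only [mul_neg, integral_neg, neg_inj] at key
  simp only [mul_assoc]
  exact key.symm

lemma derivative_hermite (n : ℕ) :
    derivative (hermite (n + 1)) = ((n + 1 : ℕ) : ℤ[X]) * hermite n := by
  induction n with
  | zero => simp
  | succ n ih =>
    rw [hermite_succ (n + 1), derivative_sub, derivative_mul, ih, derivative_mul,
      hermite_succ n]
    simp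
    ring

lemma orth (n k : ℕ) : ∫ t, H n t * H k t ∂γ = if n = k then (n.factorial : ℝ) else 0 := by
  induction n generalizing k with
  | zero =>
    cases k with
    | zero => simp [H]
    | succ k =>
      rw [← ibp (f' := fun _ => 0) (PG.H 0) (PG.const 0)]
      · simp
      · intro t
        simpa using hasDerivAt_H 0 t
  | succ n ih =>
    cases k with
    | zero =>
      simp_rw [mul_comm (H (n + 1) _)]
      rw [← ibp (f' := fun _ => 0) (PG.H 0) (PG.const 0)]
      · simp
      · intro t
        simpa using hasDerivAt_H 0 t
    | succ k =>
      rw [← ibp (f' := fun t => (n + 1 : ℝ) * H n t) (PG.H _) ((PG.const _).mul (PG.H n))]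
      · simp_rw [mul_assoc]
        rw [integral_const_mul, ih]
        split_ifs <;> first | omega | simp [Nat.factorial_succ]
      · intro t
        have := hasDerivAt_H (n + 1) t
        rw [derivative_hermite] at this
        simpa [H] using this

lemma memLp_exp (s : ℝ) : MemLp (fun t : ℝ => rexp (s * t)) 2 γ := by
  rw [memLp_two_iff_integrable_sq (by fun_prop)]
  have := integrable_exp_mul_gaussianReal (μ := 0) (v := 1) (2 * s)
  refine this.congr (.of_forall fun t => ?_)
  simp only [← Real.exp_nat_mul]
  congr 1; push_cast; ring

lemma memLp_pow (n : ℕ) : MemLp (fun t : ℝ => t ^ n) 2 γ := by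
  simpa using (PG.poly (X ^ n)).memLp

/-- Moments of the positive and negative parts agree. -/
lemma moments_zero {f : ℝ → ℝ} (hf : MemLp f 2 γ) (h0 : ∀ n, ∫ t, f t * H n t ∂γ = 0) (n : ℕ) :
    ∫ t, f t * t ^ n ∂γ = 0 := by
  induction n using Nat.strong_induction_on with
  | _ n ih =>
    have hs : ∀ t : ℝ, f t * H n t =
        f t * t ^ n + ∑ i ∈ Finset.range n, ((hermite n).coeff i : ℝ) * (f t * t ^ i) := by
      intro t
      have := congrArg (Polynomial.aeval t) (hermite_monic n).as_sum
      rw [H, this]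
      simp [natDegree_hermite, mul_add, Finset.mul_sum]
      refine Finset.sum_congr rfl fun i _ => by ring
    have h := h0 n
    simp_rw [hs] at h
    have hi : ∀ i : ℕ, Integrable (fun t => f t * t ^ i) γ := fun i =>
      hf.integrable_mul (memLp_pow i)
    rw [integral_add (hi n) (integrable_finsetSum _ fun i _ => (hi i).const_mul _),
      integral_finsetSum _ fun i _ => (hi i).const_mul _] at h
    rw [Finset.sum_eq_zero, add_zero] at h
    · exact h
    · intro i hi
      rw [integral_const_mul, ih i (Finset.mem_range.1 hi), mul_zero]

lemma eq_of_moments {μ ν : Measure ℝ} [IsFiniteMeasure μ] [IsFiniteMeasure ν]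
    (hμ : ∀ s, Integrable (fun t : ℝ => rexp (s * t)) μ)
    (hν : ∀ s, Integrable (fun t : ℝ => rexp (s * t)) ν)
    (h : ∀ n : ℕ, ∫ t, t ^ n ∂μ = ∫ t, t ^ n ∂ν) : μ = ν := by
  have eμ : integrableExpSet id μ = Set.univ := by ext s; simpa [integrableExpSet] using hμ s
  have eν : integrableExpSet id ν = Set.univ := by ext s; simpa [integrableExpSet] using hν s
  have aμ : AnalyticOnNhd ℝ (mgf id μ) Set.univ := by
    have := analyticOnNhd_mgf (X := id) (μ := μ)
    rwa [eμ, interior_univ] at this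
  have aν : AnalyticOnNhd ℝ (mgf id ν) Set.univ := by
    have := analyticOnNhd_mgf (X := id) (μ := ν)
    rwa [eν, interior_univ] at this
  have pμ := hasFPowerSeriesAt_mgf (X := id) (μ := μ) (v := 0) (by simp [eμ])
  have pν := hasFPowerSeriesAt_mgf (X := id) (μ := ν) (v := 0) (by simp [eν])
  simp only [id, zero_mul, Real.exp_zero, mul_one, h] at pμ pν
  have hm : mgf id μ = mgf id ν := by
    refine aμ.eq_of_eventuallyEq aν (z₀ := 0) ?_
    have := pμ.sub pν
    rw [sub_self] at this
    filter_upwards [this.eventually_eq_zero] with z hz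
    exact sub_eq_zero.1 hz
  have h0 : μ = 0 ↔ ν = 0 := by
    have := h 0
    simp only [pow_zero, integral_const, smul_eq_mul, mul_one] at this
    rw [← Measure.measure_univ_eq_zero, ← Measure.measure_univ_eq_zero,
      ← measureReal_eq_zero_iff, ← measureReal_eq_zero_iff, this]
  have hc := eqOn_complexMGF_of_mgf' hm h0
  refine Measure.ext_of_complexMGF_id_eq (funext fun z => hc ?_)
  simp [eμ]

lemma complete {f : ℝ → ℝ} (hf : MemLp f 2 γ) (h0 : ∀ n, ∫ t, f t * H n t ∂γ = 0) :
    f =ᵐ[γ] 0 := by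
  have hfi : Integrable f γ := hf.integrable (by norm_num)
  have hm := hf.aestronglyMeasurable.aemeasurable
  have fin : ∀ g : ℝ → ℝ, MemLp g 2 γ →
      IsFiniteMeasure (γ.withDensity fun t => ENNReal.ofReal (g t)) := fun g hg =>
    isFiniteMeasure_withDensity_ofReal (hg.integrable (by norm_num)).2
  have := fin f hf
  have := fin _ hf.neg
  have hint : ∀ g : ℝ → ℝ, MemLp g 2 γ → ∀ k : ℝ → ℝ, MemLp k 2 γ →
      Integrable (fun t => (ENNReal.ofReal (g t)).toReal • k t) γ := by
    intro g hg k hk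
    have : Integrable (fun t => max (g t) 0 * k t) γ := hg.pos_part.integrable_mul hk
    simpa [ENNReal.toReal_ofReal'] using this
  have hexp : ∀ g : ℝ → ℝ, MemLp g 2 γ → ∀ s : ℝ, Integrable (fun t => rexp (s * t))
      (γ.withDensity fun t => ENNReal.ofReal (g t)) := by
    intro g hg s
    rw [integrable_withDensity_iff_integrable_smul₀'
      hg.aestronglyMeasurable.aemeasurable.ennreal_ofReal (by simp)]
    exact hint g hg _ (memLp_exp s)
  have key : (γ.withDensity fun t => ENNReal.ofReal (f t)) =
      γ.withDensity fun t => ENNReal.ofReal ((-f) t) := by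
    refine eq_of_moments (hexp f hf) (hexp _ hf.neg) fun n => ?_
    rw [integral_withDensity_eq_integral_toReal_smul₀ hm.ennreal_ofReal (by simp),
      integral_withDensity_eq_integral_toReal_smul₀ hm.neg.ennreal_ofReal (by simp),
      ← sub_eq_zero, ← integral_sub (hint f hf _ (memLp_pow n)) (hint _ hf.neg _ (memLp_pow n)),
      ← moments_zero hf h0 n]
    refine integral_congr_ae (.of_forall fun t => ?_)
    simp only [ENNReal.toReal_ofReal', Pi.neg_apply, smul_eq_mul, ← sub_mul]
    congr 1
    rcases le_total (f t) 0 with h | h <;> simp [h]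
  rw [withDensity_eq_iff hm.ennreal_ofReal hm.neg.ennreal_ofReal] at key
  · filter_upwards [key] with t ht
    have := congrArg ENNReal.toReal ht
    simp only [ENNReal.toReal_ofReal', Pi.neg_apply] at this
    rcases le_total (f t) 0 with h | h <;> simp [h] at this <;> simpa using this
  · exact (hfi.lintegral_lt_top).ne

/-- normalized Hermite functions in L² -/
noncomputable def e (n : ℕ) : Lp ℝ 2 γ := (√(n.factorial : ℝ))⁻¹ • (PG.H n).memLp.toLp (H n)

lemma inner_toLp {f g : ℝ → ℝ} (hf : MemLp f 2 γ) (hg : MemLp g 2 γ) :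
    inner ℝ (hf.toLp f) (hg.toLp g) = ∫ t, f t * g t ∂γ := by
  rw [L2.inner_def]
  refine integral_congr_ae ?_
  filter_upwards [hf.coeFn_toLp, hg.coeFn_toLp] with t h1 h2
  rw [h1, h2]
  simp [mul_comm]

lemma orthonormal_e : Orthonormal ℝ e := by
  rw [orthonormal_iff_ite]
  intro i j
  rw [e, e, inner_smul_left, inner_smul_right, inner_toLp, orth]
  split_ifs with h
  · subst h
    have : (0:ℝ) < i.factorial := by positivity
    have h2 := Real.mul_self_sqrt this.le
    have h3 : √(i.factorial : ℝ) ≠ 0 := (Real.sqrt_pos.2 this).ne'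
    simp only [conj_trivial]
    field_simp
    nlinarith
  · simp

lemma orthogonal_bot : (Submodule.span ℝ (Set.range e))ᗮ = ⊥ := by
  rw [Submodule.eq_bot_iff]
  intro f hf
  have hfm := Lp.memLp f
  have hz : (f : ℝ → ℝ) =ᵐ[γ] 0 := by
    refine complete hfm fun n => ?_
    have := (Submodule.mem_orthogonal' _ _).1 hf (e n) (Submodule.subset_span ⟨n, rfl⟩)
    nth_rw 1 [← Lp.toLp_coeFn f hfm] at this
    rw [e, inner_smul_right, inner_toLp] at this
    have h3 : (√(n.factorial : ℝ))⁻¹ ≠ 0 :=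
      inv_ne_zero (Real.sqrt_pos.2 (by positivity)).ne'
    exact (mul_eq_zero.1 this).resolve_left h3
  exact (Lp.eq_zero_iff_ae_eq_zero).2 hz

lemma parseval {f : ℝ → ℝ} (hf : PG f) :
    ∫ t, f t ^ 2 ∂γ = ∑' n : ℕ, (1 / (n.factorial : ℝ)) * (∫ t, f t * H n t ∂γ) ^ 2 := by
  have := (HilbertBasis.mkOfOrthogonalEqBot orthonormal_e orthogonal_bot).tsum_inner_mul_inner
    (hf.memLp.toLp f) (hf.memLp.toLp f)
  rw [inner_toLp, HilbertBasis.coe_mkOfOrthogonalEqBot] at this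
  simp_rw [pow_two (f _)]
  rw [← this]
  congr 1; ext n
  rw [e, inner_smul_left, inner_smul_right, inner_toLp, inner_toLp]
  have h2 : (0:ℝ) < n.factorial := by positivity
  have h4 := Real.mul_self_sqrt h2.le
  have h3 : √(n.factorial : ℝ) ≠ 0 := (Real.sqrt_pos.2 h2).ne'
  simp_rw [mul_comm (H n _)]
  simp only [conj_trivial]
  generalize ∫ t, f t * H n t ∂γ = I
  calc _ = (√(n.factorial : ℝ) * √(n.factorial : ℝ))⁻¹ * I ^ 2 := by rw [mul_inv]; ring
    _ = _ := by rw [h4]; ring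

lemma shift (m : ℕ) (v : ℝ → ℝ) (hv : ContDiff ℝ m v)
    (hg : ∀ k ≤ m, PG (iteratedDeriv k v)) (k : ℕ) (hk : k ≤ m) (n : ℕ) :
    ∫ t, iteratedDeriv k v t * H n t ∂γ = ∫ t, v t * H (n + k) t ∂γ := by
  induction k generalizing n with
  | zero => simp
  | succ k ih =>
    rw [show n + (k + 1) = (n + 1) + k by ring, ← ih (by omega)]
    refine ibp (hg k (by omega)) (hg (k + 1) hk) (fun t => ?_) n
    rw [iteratedDeriv_succ]
    exact (hv.differentiable_iteratedDeriv k (by exact_mod_cast hk) t).hasDerivAt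

end HermiteParseval

/-- Parseval identity for derivatives in the Hermite basis.  If `v : ℝ → ℝ` is
`m`-times continuously differentiable with all derivatives of order `≤ m` of at most
polynomial growth, then `(1/m!) ∫ (v^{(m)})² dN(0,1) = ∑_{n} (C(n,m)/n!) (∫ v · He_n dN(0,1))²`,
where `He_n = Polynomial.hermite n` is the monic probabilists' Hermite polynomial and
`C(n,m) = Nat.choose n m` (which vanishes for `m > n`). -/
theorem stmt_8 (m : ℕ) (v : ℝ → ℝ) (hv : ContDiff ℝ m v)
    (hgrowth : ∀ k ≤ m, ∃ C : ℝ, 0 < C ∧ ∃ N : ℕ, ∀ t : ℝ,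
      |iteratedDeriv k v t| ≤ C * (1 + |t|) ^ N) :
    (1 / (m.factorial : ℝ)) * ∫ t : ℝ, (iteratedDeriv m v t) ^ 2 ∂(gaussianReal 0 1) =
      ∑' n : ℕ, ((n.choose m : ℝ) / (n.factorial : ℝ)) *
        (∫ t : ℝ, v t * Polynomial.aeval t (Polynomial.hermite n) ∂(gaussianReal 0 1)) ^ 2 := by
  have hg : ∀ k ≤ m, HermiteParseval.PG (iteratedDeriv k v) := fun k hk =>
    ⟨hv.continuous_iteratedDeriv k (by exact_mod_cast hk), hgrowth k hk⟩
  have h1 := HermiteParseval.parseval (hg m le_rfl)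
  simp_rw [HermiteParseval.shift m v hv hg m le_rfl] at h1
  rw [h1, ← tsum_mul_left]
  have hinj : Function.Injective (fun n : ℕ => n + m) := add_left_injective m
  symm
  rw [← hinj.tsum_eq]
  · refine tsum_congr fun n => ?_
    have h2 : ((n + m).choose m : ℝ) / ((n + m).factorial : ℝ) =
        1 / m.factorial * (1 / n.factorial) := by
      have := Nat.add_choose_mul_factorial_mul_factorial n m
      have h3 : (((n + m).choose m : ℕ) : ℝ) * n.factorial * m.factorial = (n + m).factorial := by
        exact_mod_cast this
      rw [← h3]
      have h4 : (((n + m).choose m : ℕ) : ℝ) ≠ 0 := by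
        exact_mod_cast (Nat.choose_pos (Nat.le_add_left m n)).ne'
      field_simp
    rw [h2, mul_assoc]
    rfl
  · intro n hn
    rw [Function.mem_support] at hn
    rcases lt_or_ge n m with h | h
    · simp [Nat.choose_eq_zero_of_lt h] at hn
    · exact ⟨n - m, Nat.sub_add_cancel h⟩
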